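/- Let (E₁, F₁) and (E₂, F₂) be adjoint pairs of linear operators on V, and let v ∈ V and real numbers n, m satisfy: E₁ v = 0, E₂ v = 0, E₂∘F₁ = F₁∘E₂, (E₁∘F₁ − F₁∘E₁) v = n • v, and (E₂∘F₂ − F₂∘E₂)(F₁ v) = m • (F₁ v). Then ‖F₂(F₁ v)‖² = m·n·‖v‖². -/

import Mathlib

open scoped InnerProductSpace

/-- If `(E, F)` is an adjoint pair, `E w = 0`, and `w` is an eigenvector of the commutator
`E∘F − F∘E` with real eigenvalue `c`, then `‖F w‖² = c·‖w‖²`. -/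
theorem norm_sq_lowering_of_commutator_eigenvector {V : Type*} [NormedAddCommGroup V]
    [InnerProductSpace ℂ V] (E F : V →ₗ[ℂ] V)
    (hadj : ∀ x y : V, ⟪E x, y⟫_ℂ = ⟪x, F y⟫_ℂ) (w : V) (c : ℝ) (hw : E w = 0)
    (hc : (E ∘ₗ F - F ∘ₗ E) w = (c : ℂ) • w) :
    ‖F w‖ ^ 2 = c * ‖w‖ ^ 2 := by
  have hEF : E (F w) = (c : ℂ) • w := by simpa [hw] using hc
  have h : ⟪F w, F w⟫_ℂ = (c : ℂ) * ⟪w, w⟫_ℂ := by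
    rw [← hadj, hEF, inner_smul_left, Complex.conj_ofReal]
  rw [inner_self_eq_norm_sq_to_K, inner_self_eq_norm_sq_to_K] at h
  exact Complex.ofReal_injective (by push_cast; exact h)

/-- let `(E₁, F₁)` and `(E₂, F₂)` be adjoint pairs of linear operators on `V`,
and let `v ∈ V`, `n, m ∈ ℝ` satisfy `E₁ v = 0`, `E₂ v = 0`, `E₂∘F₁ = F₁∘E₂`,
`(E₁∘F₁ − F₁∘E₁) v = n • v`, and `(E₂∘F₂ − F₂∘E₂)(F₁ v) = m • (F₁ v)`.
Then `‖F₂(F₁ v)‖² = m·n·‖v‖²`. -/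
theorem adjoint_pairs_double_lowering_norm_sq {V : Type*} [NormedAddCommGroup V]
    [InnerProductSpace ℂ V]
    (E₁ F₁ E₂ F₂ : V →ₗ[ℂ] V)
    (hadj₁ : ∀ x y : V, ⟪E₁ x, y⟫_ℂ = ⟪x, F₁ y⟫_ℂ)
    (hadj₂ : ∀ x y : V, ⟪E₂ x, y⟫_ℂ = ⟪x, F₂ y⟫_ℂ)
    (v : V) (n m : ℝ)
    (h1 : E₁ v = 0) (h2 : E₂ v = 0)
    (hcomm : E₂ ∘ₗ F₁ = F₁ ∘ₗ E₂)
    (h3 : (E₁ ∘ₗ F₁ - F₁ ∘ₗ E₁) v = (n : ℂ) • v)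
    (h4 : (E₂ ∘ₗ F₂ - F₂ ∘ₗ E₂) (F₁ v) = (m : ℂ) • (F₁ v)) :
    ‖F₂ (F₁ v)‖ ^ 2 = m * n * ‖v‖ ^ 2 := by
  have hE₂ : E₂ (F₁ v) = 0 := by simpa [h2] using LinearMap.congr_fun hcomm v
  rw [norm_sq_lowering_of_commutator_eigenvector E₂ F₂ hadj₂ (F₁ v) m hE₂ h4,
    norm_sq_lowering_of_commutator_eigenvector E₁ F₁ hadj₁ v n h1 h3, mul_assoc]
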